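/- Let 0 < α < 0.15 and let L > 0 satisfy (α + L) e^{4L} ≤ Γ(1+α)² / (π Γ(1−2α)), where Γ is the gamma function. Let N ≥ 2 be an integer with log(N + 1 + α) + 1/(2N − 1) ≤ (1 − γ) + L/α, where γ is the Euler–Mascheroni constant. Then for every set of α-perturbed nodes x̃_{−N},…,x̃_N, all weights of the unique quadrature rule exact on T_N at these nodes are nonnegative. -/

import Mathlib

open Real Finset

/-- `q` is a trigonometric polynomial of degree ≤ N. -/
def IsTrigPoly (N : ℕ) (q : ℝ → ℂ) : Prop :=
  ∃ c : ℤ → ℂ, ∀ x : ℝ,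
    q x = ∑ k ∈ Finset.Icc (-(N:ℤ)) (N:ℤ), c k * Complex.exp (Complex.I * (k : ℂ) * (x : ℂ))

/-- `x` is a set of α-perturbed nodes of size 2N+1. -/
def PerturbedNodes (N : ℕ) (α : ℝ) (x : ℤ → ℝ) : Prop :=
  ∀ j ∈ Finset.Icc (-(N:ℤ)) (N:ℤ),
    |x j - (j : ℝ) * (2*π/(2*N+1))| ≤ α * (2*π/(2*N+1))

/-- The weights `w` form a quadrature rule at the nodes `x` that is exact on `T_N`. -/
def ExactQuad (N : ℕ) (x : ℤ → ℝ) (w : ℤ → ℝ) : Prop :=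
  ∀ q : ℝ → ℂ, IsTrigPoly N q →
    ∑ j ∈ Finset.Icc (-(N:ℤ)) (N:ℤ), (w j : ℂ) * q (x j) = ∫ t in (-π)..π, q t

lemma exp_two_mul_le_div {x : ℝ} (h0 : 0 ≤ x) (h1 : x < 1) :
    Real.exp (2 * x) ≤ (1 + x) / (1 - x) := by
  have hs := Real.hasSum_log_sub_log_of_abs_lt_one (x := x) (by rw [abs_of_nonneg h0]; exact h1)
  have h := le_hasSum hs 0 (fun k _ => by positivity)
  have h2 : 2 * x ≤ Real.log ((1 + x) / (1 - x)) := by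
    rw [Real.log_div (by linarith) (by linarith)]
    simpa using h
  have hpos : 0 < (1 + x) / (1 - x) := div_pos (by linarith) (by linarith)
  calc Real.exp (2 * x) ≤ Real.exp (Real.log ((1 + x) / (1 - x))) := Real.exp_le_exp.2 h2
    _ = _ := Real.exp_log hpos

/-- The partial sums of `e^{4αH_m}/(m+α)` are controlled by their last harmonic number. -/
lemma sum_exp_harmonic_div_le {α : ℝ} (hα0 : 0 < α) (hα : α < 0.15) {N : ℕ} (hN : 2 ≤ N) :
    ∑ m ∈ Finset.Ico 1 (N + 1), Real.exp (4 * α * (harmonic m : ℝ)) / ((m : ℝ) + α) ≤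
      (harmonic N : ℝ) * Real.exp (4 * α * ((harmonic N : ℝ) - 1 / 2)) := by
  induction N, hN using Nat.le_induction with
  | base =>
    have h1 : (harmonic 1 : ℝ) = 1 := by norm_num [harmonic]
    have h2 : (harmonic 2 : ℝ) = 3 / 2 := by norm_num [harmonic, Finset.sum_range_succ]
    rw [Finset.sum_Ico_succ_top (by norm_num), Finset.sum_Ico_succ_top (by norm_num)]
    simp only [Finset.Ico_self, Finset.sum_empty, h1, h2, zero_add, Nat.cast_one, Nat.cast_ofNat]
    have e1 : Real.exp (4 * α * (3 / 2)) = Real.exp (2 * α) * Real.exp (4 * α) := by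
      rw [← Real.exp_add]; congr 1; ring
    have e2 : Real.exp (4 * α * (3 / 2 - 1 / 2)) = Real.exp (4 * α) := by congr 1; ring
    rw [e1, e2, mul_one]
    have hb := exp_two_mul_le_div hα0.le (by linarith)
    have hc : 1 / (1 + α) + Real.exp (2 * α) / (2 + α) ≤ 3 / 2 := by
      have : 1 / (1 + α) + ((1 + α) / (1 - α)) / (2 + α) ≤ 3 / 2 := by
        have : 0 < 1 - α := by linarith
        rw [div_div, div_add_div _ _ (by positivity) (by positivity),
          div_le_div_iff₀ (by positivity) (by positivity)]
        nlinarith [mul_pos hα0 hα0, mul_pos hα0 (mul_pos hα0 hα0)]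
      have h3 : Real.exp (2 * α) / (2 + α) ≤ ((1 + α) / (1 - α)) / (2 + α) := by gcongr
      linarith
    calc Real.exp (4 * α) / (1 + α) + Real.exp (2 * α) * Real.exp (4 * α) / (2 + α)
        = (1 / (1 + α) + Real.exp (2 * α) / (2 + α)) * Real.exp (4 * α) := by ring
      _ ≤ _ := by gcongr
  | succ N hN ih =>
    rw [Finset.sum_Ico_succ_top (by omega), harmonic_succ]
    set H : ℝ := (harmonic N : ℝ) with hH
    have hHge : 3 / 2 ≤ H := by
      have h2 : (harmonic 2 : ℝ) = 3 / 2 := by norm_num [harmonic, Finset.sum_range_succ]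
      rw [← h2, hH]
      have : harmonic 2 ≤ harmonic N := by
        unfold harmonic
        exact Finset.sum_le_sum_of_subset_of_nonneg (Finset.range_mono hN)
          (fun _ _ _ => by positivity)
      exact_mod_cast this
    push_cast
    set u : ℝ := ((N : ℝ) + 1)⁻¹ with hu
    have hu0 : 0 < u := by positivity
    have hu3 : u ≤ 1 / 3 := by
      rw [hu, inv_eq_one_div]
      have : (2 : ℝ) ≤ N := by exact_mod_cast hN
      apply one_div_le_one_div_of_le <;> linarith
    have hdiv : Real.exp (4 * α * (H + u)) / ((N : ℝ) + 1 + α) ≤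
        u * Real.exp (4 * α * (H + u)) := by
      rw [hu, inv_mul_eq_div]
      exact div_le_div_of_nonneg_left (Real.exp_pos _).le (by positivity) (by linarith)
    have hstep : Real.exp (4 * α * (1 / 2 + u)) ≤ 1 + 4 * α * H := by
      have hx1 : 4 * α * (1 / 2 + u) ≤ 10 * α / 3 := by nlinarith
      have h1 := Real.abs_exp_sub_one_sub_id_le (x := 10 * α / 3)
        (by rw [abs_of_pos (by positivity)]; linarith)
      have h2 := (abs_le.1 h1).2
      have h3 := Real.exp_le_exp.2 hx1
      nlinarith
    have hconv : Real.exp (4 * α * (H - 1 / 2)) * (1 + 4 * α * u) ≤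
        Real.exp (4 * α * (H + u - 1 / 2)) := by
      have : 4 * α * (H + u - 1 / 2) = 4 * α * (H - 1 / 2) + 4 * α * u := by ring
      rw [this, Real.exp_add]
      gcongr
      linarith [Real.add_one_le_exp (4 * α * u)]
    have hsplit : Real.exp (4 * α * (H + u)) =
        Real.exp (4 * α * (H - 1 / 2)) * Real.exp (4 * α * (1 / 2 + u)) := by
      rw [← Real.exp_add]; congr 1; ring
    set E := Real.exp (4 * α * (H - 1 / 2)) with hE
    have hE0 : 0 < E := Real.exp_pos _
    have h4 : u * Real.exp (4 * α * (H + u)) ≤ u * (E * (1 + 4 * α * H)) := by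
      rw [hsplit]; gcongr
    have h5 : (H + u) * (E * (1 + 4 * α * u)) ≤
        (H + u) * Real.exp (4 * α * (H + u - 1 / 2)) := by gcongr
    have h6 : 0 ≤ u * u * α * E := by positivity
    nlinarith

lemma prod_ratio_mul_exp_le {α : ℝ} (hα0 : 0 < α) (hα : α < 1 / 2) {m n : ℕ} (hmn : m ≤ n) :
    (∏ i ∈ Finset.Ico 1 (m + 1), ((i : ℝ) + α) / ((i : ℝ) - α)) *
      Real.exp (2 * α * ((harmonic n : ℝ) - (harmonic m : ℝ))) ≤
    ∏ i ∈ Finset.Ico 1 (n + 1), ((i : ℝ) + α) / ((i : ℝ) - α) := by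
  induction n, hmn using Nat.le_induction with
  | base => simp
  | succ n hmn ih =>
    rw [Finset.prod_Ico_succ_top (by omega : 1 ≤ n + 1), harmonic_succ]
    push_cast
    have hn : (0 : ℝ) < (n : ℝ) + 1 := by positivity
    have hn1 : (1 : ℝ) ≤ (n : ℝ) + 1 := by linarith [Nat.cast_nonneg (α := ℝ) n]
    have hx : Real.exp (2 * (α / ((n : ℝ) + 1))) ≤ ((n : ℝ) + 1 + α) / ((n : ℝ) + 1 - α) := by
      have h1 : α / ((n : ℝ) + 1) < 1 := by rw [div_lt_one hn]; linarith
      refine (exp_two_mul_le_div (by positivity) h1).trans_eq ?_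
      have : (n : ℝ) + 1 - α ≠ 0 := by linarith
      have h3 : 1 - α / ((n : ℝ) + 1) ≠ 0 := by linarith
      rw [div_eq_div_iff h3 this]
      field_simp
    have hs : 2 * α * ((harmonic n : ℝ) + ((n : ℝ) + 1)⁻¹ - (harmonic m : ℝ)) =
        2 * α * ((harmonic n : ℝ) - (harmonic m : ℝ)) + 2 * (α / ((n : ℝ) + 1)) := by
      field_simp; ring
    rw [hs, Real.exp_add, ← mul_assoc]
    refine mul_le_mul ih hx (Real.exp_pos _).le ?_
    refine Finset.prod_nonneg fun i hi => ?_
    have : (1 : ℝ) ≤ i := by exact_mod_cast (Finset.mem_Ico.1 hi).1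
    exact div_nonneg (by linarith) (by linarith)

lemma prod_ratio_le_Gamma {α : ℝ} (hα0 : 0 < α) (hα : α < 1 / 2) (m : ℕ) :
    ∏ i ∈ Finset.Ico 1 (m + 1), ((i : ℝ) + α) / ((i : ℝ) - α) ≤
      Real.Gamma (1 - α) / Real.Gamma (1 + α) *
        Real.exp (2 * α * ((harmonic m : ℝ) - Real.eulerMascheroniConstant)) := by
  set q := ∏ i ∈ Finset.Ico 1 (m + 1), ((i : ℝ) + α) / ((i : ℝ) - α) with hq
  have hq0 : 0 ≤ q := by
    refine Finset.prod_nonneg fun i hi => ?_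
    have : (1 : ℝ) ≤ i := by exact_mod_cast (Finset.mem_Ico.1 hi).1
    exact div_nonneg (by linarith) (by linarith)
  have hG : Real.Gamma (1 + α) ≠ 0 := (Real.Gamma_pos_of_pos (by linarith)).ne'
  have hlim := (Real.GammaSeq_tendsto_Gamma (1 - α)).div
    (Real.GammaSeq_tendsto_Gamma (1 + α)) hG
  have hkey : q * Real.exp (2 * α * (Real.eulerMascheroniConstant - (harmonic m : ℝ))) ≤
      Real.Gamma (1 - α) / Real.Gamma (1 + α) := by
    refine ge_of_tendsto hlim ?_
    filter_upwards [Filter.eventually_ge_atTop (max 1 m)] with n hn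
    have hn1 : 1 ≤ n := (le_max_left _ _).trans hn
    have hnm : m ≤ n + 1 := ((le_max_right _ _).trans hn).trans (Nat.le_succ n)
    have hn0 : (0 : ℝ) < n := by exact_mod_cast hn1
    have hprod : ∏ i ∈ Finset.Ico 1 (n + 1 + 1), ((i : ℝ) + α) / ((i : ℝ) - α) =
        (∏ j ∈ Finset.range (n + 1), (1 + α + (j : ℝ))) /
          ∏ j ∈ Finset.range (n + 1), (1 - α + (j : ℝ)) := by
      rw [Finset.prod_Ico_eq_prod_range, ← Finset.prod_div_distrib]
      refine Finset.prod_congr (by simp) fun j _ => ?_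
      push_cast
      congr 1 <;> ring
    have hratio : Real.GammaSeq (1 - α) n / Real.GammaSeq (1 + α) n =
        (∏ i ∈ Finset.Ico 1 (n + 1 + 1), ((i : ℝ) + α) / ((i : ℝ) - α)) *
          Real.exp (-(2 * α * Real.log n)) := by
      have hr : Real.exp (-(2 * α * Real.log n)) = (n : ℝ) ^ (1 - α) / (n : ℝ) ^ (1 + α) := by
        rw [← Real.rpow_sub hn0, Real.rpow_def_of_pos hn0]
        congr 1; ring
      have h1 : ∏ j ∈ Finset.range (n + 1), (1 + α + (j : ℝ)) ≠ 0 :=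
        Finset.prod_ne_zero_iff.2 fun j _ => by positivity
      have h2 : ∏ j ∈ Finset.range (n + 1), (1 - α + (j : ℝ)) ≠ 0 :=
        Finset.prod_ne_zero_iff.2 fun j _ => by
          have : (0 : ℝ) ≤ j := Nat.cast_nonneg j
          linarith
      have h3 : (n.factorial : ℝ) ≠ 0 := by positivity
      have h4 : (n : ℝ) ^ (1 + α) ≠ 0 := by positivity
      rw [hprod, hr, Real.GammaSeq, Real.GammaSeq]
      field_simp
    simp only [Pi.div_apply]
    rw [hratio]
    have hstep := prod_ratio_mul_exp_le hα0 hα hnm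
    have hγ : Real.eulerMascheroniConstant ≤ (harmonic (n + 1) : ℝ) - Real.log n := by
      have h := (Real.eulerMascheroniConstant_lt_eulerMascheroniSeq' n).le
      rw [Real.eulerMascheroniSeq', if_neg (by omega)] at h
      rw [harmonic_succ]
      push_cast
      have : (0 : ℝ) ≤ ((n : ℝ) + 1)⁻¹ := by positivity
      linarith
    calc q * Real.exp (2 * α * (Real.eulerMascheroniConstant - (harmonic m : ℝ)))
        ≤ q * Real.exp (2 * α * ((harmonic (n + 1) : ℝ) - Real.log n - (harmonic m : ℝ))) := by
          gcongr
      _ = q * Real.exp (2 * α * ((harmonic (n + 1) : ℝ) - (harmonic m : ℝ))) *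
          Real.exp (-(2 * α * Real.log n)) := by
          rw [mul_assoc q, ← Real.exp_add]; congr 2; ring
      _ ≤ _ := by gcongr
  calc q = q * Real.exp (2 * α * (Real.eulerMascheroniConstant - (harmonic m : ℝ))) *
        Real.exp (2 * α * ((harmonic m : ℝ) - Real.eulerMascheroniConstant)) := by
        rw [mul_assoc q, ← Real.exp_add]
        ring_nf
        simp
    _ ≤ _ := by gcongr

lemma Gamma_one_sub_sq_le {α : ℝ} (hα : α < 1 / 2) :
    Real.Gamma (1 - α) ^ 2 ≤ Real.Gamma (1 - 2 * α) := by
  have hpos : 0 < Real.Gamma (1 - 2 * α) := Real.Gamma_pos_of_pos (by linarith)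
  have h := Real.Gamma_mul_add_mul_le_rpow_Gamma_mul_rpow_Gamma (s := 1 - 2 * α) (t := 1)
    (a := 1 / 2) (b := 1 / 2) (by linarith) one_pos (by norm_num) (by norm_num) (by norm_num)
  have e : 1 / 2 * (1 - 2 * α) + 1 / 2 * 1 = 1 - α := by ring
  rw [e, Real.Gamma_one, Real.one_rpow, mul_one, ← Real.sqrt_eq_rpow] at h
  have h0 : 0 ≤ Real.Gamma (1 - α) := (Real.Gamma_pos_of_pos (by linarith)).le
  calc Real.Gamma (1 - α) ^ 2 ≤ Real.sqrt (Real.Gamma (1 - 2 * α)) ^ 2 := by gcongr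
    _ = _ := Real.sq_sqrt hpos.le

/-- Under the size condition, the dominating sum of the off-diagonal values is at most one. -/
lemma pi_mul_sum_prod_ratio_sq_le_one (α L : ℝ) (hα0 : 0 < α) (hα : α < 0.15)
    (hLcond : (α + L) * Real.exp (4 * L) ≤
      (Real.Gamma (1 + α)) ^ 2 / (π * Real.Gamma (1 - 2 * α)))
    (N : ℕ) (hN : 2 ≤ N)
    (hNcond : Real.log ((N : ℝ) + 1 + α) + 1 / (2 * (N : ℝ) - 1) ≤
      (1 - Real.eulerMascheroniConstant) + L / α) :
    ∑ m ∈ Finset.Ico 1 (N + 1), π * (α / ((m : ℝ) + α)) *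
      (∏ i ∈ Finset.Ico 1 (m + 1), ((i : ℝ) + α) / ((i : ℝ) - α)) ^ 2 ≤ 1 := by
  set γ := Real.eulerMascheroniConstant with hγ
  have hα2 : α < 1 / 2 := by linarith
  have hG1 : 0 < Real.Gamma (1 + α) := Real.Gamma_pos_of_pos (by linarith)
  have hG2 : 0 < Real.Gamma (1 - 2 * α) := Real.Gamma_pos_of_pos (by linarith)
  set C := Real.Gamma (1 - 2 * α) / Real.Gamma (1 + α) ^ 2 with hC
  have hC0 : 0 < C := by positivity
  have hq : ∀ m : ℕ, (∏ i ∈ Finset.Ico 1 (m + 1), ((i : ℝ) + α) / ((i : ℝ) - α)) ^ 2 ≤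
      C * Real.exp (-(4 * α * γ)) * Real.exp (4 * α * (harmonic m : ℝ)) := by
    intro m
    have h := prod_ratio_le_Gamma hα0 hα2 m
    have h0 : 0 ≤ ∏ i ∈ Finset.Ico 1 (m + 1), ((i : ℝ) + α) / ((i : ℝ) - α) := by
      refine Finset.prod_nonneg fun i hi => ?_
      have : (1 : ℝ) ≤ i := by exact_mod_cast (Finset.mem_Ico.1 hi).1
      exact div_nonneg (by linarith) (by linarith)
    calc _ ≤ (Real.Gamma (1 - α) / Real.Gamma (1 + α) *
          Real.exp (2 * α * ((harmonic m : ℝ) - γ))) ^ 2 := by gcongr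
      _ = Real.Gamma (1 - α) ^ 2 / Real.Gamma (1 + α) ^ 2 * (Real.exp (-(4 * α * γ)) *
          Real.exp (4 * α * (harmonic m : ℝ))) := by
          rw [mul_pow, div_pow, ← Real.exp_nat_mul, ← Real.exp_add]
          congr 2; push_cast; ring
      _ ≤ C * (Real.exp (-(4 * α * γ)) * Real.exp (4 * α * (harmonic m : ℝ))) := by
          rw [hC]
          gcongr
          exact Gamma_one_sub_sq_le hα2
      _ = _ := by ring
  have hH : (harmonic N : ℝ) ≤ 1 + L / α := by
    have h1 := (Real.eulerMascheroniSeq_lt_eulerMascheroniConstant N).le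
    rw [Real.eulerMascheroniSeq] at h1
    have h2 : Real.log ((N : ℝ) + 1) ≤ Real.log ((N : ℝ) + 1 + α) :=
      Real.log_le_log (by positivity) (by linarith)
    have h3 : 0 ≤ 1 / (2 * (N : ℝ) - 1) := by
      have : (2 : ℝ) ≤ N := by exact_mod_cast hN
      exact div_nonneg zero_le_one (by linarith)
    linarith
  have hαH : α * (harmonic N : ℝ) ≤ α + L := by
    calc α * (harmonic N : ℝ) ≤ α * (1 + L / α) := by gcongr
      _ = α + L := by field_simp
  have hH0 : 0 ≤ (harmonic N : ℝ) := by exact_mod_cast (harmonic_pos (by omega)).le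
  have hhalf := Real.one_half_lt_eulerMascheroniConstant
  rw [← hγ] at hhalf
  calc _ ≤ ∑ m ∈ Finset.Ico 1 (N + 1), π * (α / ((m : ℝ) + α)) *
        (C * Real.exp (-(4 * α * γ)) * Real.exp (4 * α * (harmonic m : ℝ))) := by
        gcongr with m hm
        exact hq m
    _ = π * α * C * Real.exp (-(4 * α * γ)) * ∑ m ∈ Finset.Ico 1 (N + 1),
        Real.exp (4 * α * (harmonic m : ℝ)) / ((m : ℝ) + α) := by
        rw [Finset.mul_sum]
        refine Finset.sum_congr rfl fun m _ => by ring
    _ ≤ π * α * C * Real.exp (-(4 * α * γ)) *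
        ((harmonic N : ℝ) * Real.exp (4 * α * ((harmonic N : ℝ) - 1 / 2))) := by
        gcongr
        exact sum_exp_harmonic_div_le hα0 hα hN
    _ = π * C * ((α * (harmonic N : ℝ)) *
        Real.exp (-(4 * α * γ) + 4 * α * ((harmonic N : ℝ) - 1 / 2))) := by
        rw [Real.exp_add]; ring
    _ ≤ π * C * ((α + L) * Real.exp (4 * L)) := by
        have h0 : 0 ≤ α * (harmonic N : ℝ) := by positivity
        have hexp : -(4 * α * γ) + 4 * α * ((harmonic N : ℝ) - 1 / 2) ≤ 4 * L := by
          nlinarith [mul_lt_mul_of_pos_left hhalf hα0]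
        exact mul_le_mul_of_nonneg_left (mul_le_mul hαH (Real.exp_le_exp.2 hexp)
          (Real.exp_pos _).le (h0.trans hαH)) (by positivity)
    _ ≤ π * C * ((Real.Gamma (1 + α)) ^ 2 / (π * Real.Gamma (1 - 2 * α))) := by gcongr
    _ = 1 := by
        rw [hC]
        have := Real.pi_pos
        field_simp

/-- The sine rescaled so that the `2N+1` equispaced nodes sit at the integers. -/
noncomputable def nodeSin (N : ℕ) (t : ℝ) : ℝ := Real.sin (π * t / (2 * N + 1))

lemma nodeSin_pos {N : ℕ} {t : ℝ} (h0 : 0 < t) (h1 : t < 2 * N + 1) : 0 < nodeSin N t := by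
  have hn : (0 : ℝ) < 2 * N + 1 := by positivity
  refine Real.sin_pos_of_pos_of_lt_pi (by positivity) ?_
  rw [div_lt_iff₀ hn]
  exact mul_lt_mul_of_pos_left h1 Real.pi_pos

lemma nodeSin_reflect (N : ℕ) (t : ℝ) : nodeSin N (2 * N + 1 - t) = nodeSin N t := by
  have hn : (2 * N + 1 : ℝ) ≠ 0 := by positivity
  unfold nodeSin
  rw [← Real.sin_pi_sub (π * t / (2 * N + 1))]
  congr 1
  field_simp

lemma nodeSin_neg (N : ℕ) (t : ℝ) : nodeSin N (-t) = -nodeSin N t := by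
  unfold nodeSin
  rw [← Real.sin_neg]
  congr 1
  ring

lemma abs_nodeSin_sub_int_mul (N : ℕ) (t : ℝ) (z : ℤ) :
    |nodeSin N (t - z * (2 * N + 1))| = |nodeSin N t| := by
  have hn : (2 * N + 1 : ℝ) ≠ 0 := by positivity
  unfold nodeSin
  have : π * (t - z * (2 * N + 1)) / (2 * N + 1) = π * t / (2 * N + 1) - z * π := by
    field_simp
  rw [this, Real.sin_sub_int_mul_pi, abs_mul]
  simp

lemma nodeSin_le_nodeSin {N : ℕ} {s t : ℝ} (hs : -(N + 1 / 2 : ℝ) ≤ s) (hst : s ≤ t)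
    (ht : t ≤ N + 1 / 2) : nodeSin N s ≤ nodeSin N t := by
  have hn : (0 : ℝ) < 2 * N + 1 := by positivity
  have hpi := Real.pi_pos
  apply Real.sin_le_sin_of_le_of_le_pi_div_two
  · rw [le_div_iff₀ hn]; nlinarith
  · rw [div_le_iff₀ hn]; nlinarith
  · gcongr

lemma nodeSin_mul_sub_mul (N : ℕ) (a b α δ : ℝ) :
    nodeSin N (a + α) * nodeSin N (b + δ) - nodeSin N (a - δ) * nodeSin N (b - α) =
      nodeSin N (a + b) * nodeSin N (α + δ) := by
  unfold nodeSin
  simp only [mul_add, mul_sub, add_div, sub_div]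
  simp only [Real.sin_add, Real.sin_sub]
  generalize π * a / (2 * N + 1) = A
  generalize π * b / (2 * N + 1) = B
  generalize π * α / (2 * N + 1) = x
  generalize π * δ / (2 * N + 1) = y
  ring

/-- Moving a node by at most `α` changes the quotient of its two factors least favourably
at an endpoint. -/
lemma abs_nodeSin_div_le {N : ℕ} {a b α δ : ℝ} (hα : α < 1 / 2) (hδ : |δ| ≤ α)
    (ha : 1 ≤ a) (hb : 1 ≤ b) (hab : a + b ≤ 2 * N) :
    |nodeSin N (a - δ)| / |nodeSin N (b + δ)| ≤ nodeSin N (a + α) / nodeSin N (b - α) := by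
  obtain ⟨h1, h2⟩ := abs_le.1 hδ
  have p1 : 0 < nodeSin N (a - δ) := nodeSin_pos (by linarith) (by linarith)
  have p2 : 0 < nodeSin N (b + δ) := nodeSin_pos (by linarith) (by linarith)
  have p3 : 0 < nodeSin N (b - α) := nodeSin_pos (by linarith) (by linarith)
  rw [abs_of_pos p1, abs_of_pos p2, div_le_div_iff₀ p2 p3]
  have hid := nodeSin_mul_sub_mul N a b α δ
  have p4 : 0 ≤ nodeSin N (a + b) := (nodeSin_pos (by linarith) (by linarith)).le
  have p5 : 0 ≤ nodeSin N (α + δ) := by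
    rcases (by linarith : 0 ≤ α + δ).eq_or_lt with h | h
    · rw [← h]; simp [nodeSin]
    · exact (nodeSin_pos h (by linarith)).le
  nlinarith [mul_nonneg p4 p5]

/-- The product of the extremal quotients over the indices below `m`. -/
noncomputable def sinRatioProd (N : ℕ) (α : ℝ) (m : ℕ) : ℝ :=
  ∏ i ∈ Finset.Ico 1 m, nodeSin N (i + α) / nodeSin N (i - α)

lemma sinRatioProd_succ (N : ℕ) (α : ℝ) {m : ℕ} (hm : 1 ≤ m) :
    sinRatioProd N α (m + 1) =
      sinRatioProd N α m * (nodeSin N (m + α) / nodeSin N (m - α)) :=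
  Finset.prod_Ico_succ_top hm _

lemma sinRatioProd_nonneg {N : ℕ} {α : ℝ} (hα0 : 0 < α) (hα : α < 1 / 2) {m : ℕ}
    (hm : m ≤ 2 * N + 1) : 0 ≤ sinRatioProd N α m := by
  refine Finset.prod_nonneg fun i hi => ?_
  rw [Finset.mem_Ico] at hi
  have h1 : (1 : ℝ) ≤ i := by exact_mod_cast hi.1
  have h2 : (i : ℝ) ≤ 2 * N := by exact_mod_cast (by omega : i ≤ 2 * N)
  exact div_nonneg (nodeSin_pos (by linarith) (by linarith)).le
    (nodeSin_pos (by linarith) (by linarith)).le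

lemma sinRatioProd_reflect {N : ℕ} {α : ℝ} (hα0 : 0 < α) (hα : α < 1 / 2) {d : ℕ}
    (hd : d ≤ N) : sinRatioProd N α (N + 1 + d) = sinRatioProd N α (N + 1 - d) := by
  induction d with
  | zero => simp
  | succ d ih =>
    have h1 := sinRatioProd_succ N α (by omega : 1 ≤ N + 1 + d)
    have h2 := sinRatioProd_succ N α (by omega : 1 ≤ N - d)
    have e1 : N - d + 1 = N + 1 - d := by omega
    have e2 : N + 1 - (d + 1) = N - d := by omega
    rw [e1] at h2
    rw [e2, ← add_assoc, h1, ih (by omega), h2]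
    have c1 : ((N + 1 + d : ℕ) : ℝ) + α = 2 * N + 1 - ((N - d : ℕ) - α) := by
      rw [Nat.cast_sub (by omega)]; push_cast; ring
    have c2 : ((N + 1 + d : ℕ) : ℝ) - α = 2 * N + 1 - ((N - d : ℕ) + α) := by
      rw [Nat.cast_sub (by omega)]; push_cast; ring
    rw [c1, c2, nodeSin_reflect, nodeSin_reflect]
    have h3 : (1 : ℝ) ≤ (N - d : ℕ) := by exact_mod_cast (by omega : 1 ≤ N - d)
    have h4 : ((N - d : ℕ) : ℝ) ≤ N := by exact_mod_cast Nat.sub_le N d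
    have p1 : nodeSin N ((N - d : ℕ) + α) ≠ 0 :=
      (nodeSin_pos (by linarith) (by linarith)).ne'
    have p2 : nodeSin N ((N - d : ℕ) - α) ≠ 0 :=
      (nodeSin_pos (by linarith) (by linarith)).ne'
    field_simp

lemma sinRatioProd_le {N : ℕ} {α : ℝ} (hα0 : 0 < α) (hα : α < 1 / 2) {m : ℕ}
    (hm : m ≤ N + 1) :
    sinRatioProd N α m ≤ ∏ i ∈ Finset.Ico 1 m, ((i : ℝ) + α) / ((i : ℝ) - α) := by
  refine Finset.prod_le_prod (fun i hi => ?_) (fun i hi => ?_) <;> rw [Finset.mem_Ico] at hi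
  all_goals
    have h1 : (1 : ℝ) ≤ i := by exact_mod_cast hi.1
    have h2 : (i : ℝ) ≤ N := by exact_mod_cast (by omega : i ≤ N)
    have p1 : 0 < nodeSin N (i + α) := nodeSin_pos (by linarith) (by linarith)
    have p2 : 0 < nodeSin N (i - α) := nodeSin_pos (by linarith) (by linarith)
  · positivity
  · have q1 : (0 : ℝ) < i - α := by linarith
    have q2 : (0 : ℝ) < i + α := by linarith
    have hn : (0 : ℝ) < 2 * N + 1 := by positivity
    rw [div_le_div_iff₀ p2 q1]
    have hmem : π * ((i : ℝ) + α) / (2 * N + 1) ∈ Set.Icc 0 π := by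
      refine ⟨by positivity, ?_⟩
      rw [div_le_iff₀ hn]
      exact mul_le_mul_of_nonneg_left (by linarith) Real.pi_pos.le
    have ha : 0 ≤ 1 - ((i : ℝ) - α) / (i + α) := by
      rw [sub_nonneg, div_le_one q2]
      linarith
    have hc := strictConcaveOn_sin_Icc.concaveOn.2 (Set.left_mem_Icc.2 Real.pi_pos.le) hmem ha
      (div_nonneg q1.le q2.le) (by ring)
    simp only [smul_eq_mul, mul_zero, Real.sin_zero, zero_add] at hc
    have e : ((i : ℝ) - α) / (i + α) * (π * (i + α) / (2 * N + 1)) = π * (i - α) / (2 * N + 1) := by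
      field_simp
    rw [e, div_mul_eq_mul_div, div_le_iff₀ q2] at hc
    unfold nodeSin
    linarith

/-- The size of an off-diagonal value relative to the diagonal one. -/
noncomputable def offDiagRatio (N : ℕ) (δ : ℕ → ℝ) (p : ℕ) : ℝ :=
  ∏ i ∈ Finset.Ico 1 (2 * N + 1), |nodeSin N (p - i - δ i)| / |nodeSin N (i + δ i)|

lemma offDiagRatio_reflect (N : ℕ) (δ : ℕ → ℝ) {p : ℕ} (hp : p ≤ 2 * N + 1) :
    offDiagRatio N δ p = offDiagRatio N (fun i => -δ (2 * N + 1 - i)) (2 * N + 1 - p) := by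
  unfold offDiagRatio
  have h := Finset.prod_Ico_reflect
    (fun i : ℕ => |nodeSin N (p - i - δ i)| / |nodeSin N (i + δ i)|) 1
    (show 2 * N + 1 ≤ 2 * N + 1 + 1 by omega)
  have e1 : 2 * N + 1 + 1 - (2 * N + 1) = 1 := by omega
  have e2 : 2 * N + 1 + 1 - 1 = 2 * N + 1 := by omega
  rw [e1, e2] at h
  rw [← h]
  refine Finset.prod_congr rfl fun i hi => ?_
  rw [Finset.mem_Ico] at hi
  have c1 : ((2 * N + 1 - i : ℕ) : ℝ) = 2 * N + 1 - i := by
    rw [Nat.cast_sub (by omega)]; push_cast; ring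
  have c2 : ((2 * N + 1 - p : ℕ) : ℝ) = 2 * N + 1 - p := by
    rw [Nat.cast_sub (by omega)]; push_cast; ring
  beta_reduce
  rw [c1, c2]
  generalize δ (2 * N + 1 - i) = ε
  congr 1
  · rw [← abs_neg, ← nodeSin_neg]
    congr 2
    ring
  · rw [← nodeSin_reflect]
    congr 2
    ring

lemma offDiagRatio_le {N : ℕ} {α : ℝ} (hα0 : 0 < α) (hα : α < 1 / 2) {δ : ℕ → ℝ}
    (hδ : ∀ i, |δ i| ≤ α) {p : ℕ} (hp1 : 1 ≤ p) (hpN : p ≤ N) :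
    offDiagRatio N δ p ≤ nodeSin N α / nodeSin N (p + α) * sinRatioProd N α (p + 1) ^ 2 := by
  have hp1' : (1 : ℝ) ≤ p := by exact_mod_cast hp1
  have hpN' : (p : ℝ) ≤ N := by exact_mod_cast hpN
  have hsplit : offDiagRatio N δ p =
      (∏ i ∈ Finset.Ico 1 p, |nodeSin N (p - i - δ i)| / |nodeSin N (i + δ i)|) *
      (|nodeSin N (p - p - δ p)| / |nodeSin N (p + δ p)|) *
      ∏ i ∈ Finset.Ico (p + 1) (2 * N + 1), |nodeSin N (p - i - δ i)| / |nodeSin N (i + δ i)| := by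
    unfold offDiagRatio
    rw [← Finset.prod_Ico_consecutive _ (show 1 ≤ p + 1 by omega)
      (show p + 1 ≤ 2 * N + 1 by omega), Finset.prod_Ico_succ_top hp1]
  have hleft : ∏ i ∈ Finset.Ico 1 p, |nodeSin N (p - i - δ i)| / |nodeSin N (i + δ i)| ≤
      sinRatioProd N α p := by
    have hr : sinRatioProd N α p =
        ∏ i ∈ Finset.Ico 1 p, nodeSin N ((p : ℝ) - i + α) / nodeSin N (i - α) := by
      unfold sinRatioProd
      rw [Finset.prod_div_distrib, Finset.prod_div_distrib]
      congr 1
      have h := Finset.prod_Ico_reflect (fun i : ℕ => nodeSin N (i + α)) 1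
        (show p ≤ p + 1 by omega)
      have e1 : p + 1 - p = 1 := by omega
      rw [e1, Nat.add_sub_cancel] at h
      rw [← h]
      refine Finset.prod_congr rfl fun i hi => ?_
      rw [Finset.mem_Ico] at hi
      rw [Nat.cast_sub (by omega)]
    rw [hr]
    refine Finset.prod_le_prod (fun i _ => by positivity) fun i hi => ?_
    rw [Finset.mem_Ico] at hi
    have h1 : (1 : ℝ) ≤ i := by exact_mod_cast hi.1
    have h2 : (i : ℝ) + 1 ≤ p := by exact_mod_cast hi.2
    exact abs_nodeSin_div_le hα (hδ i) (by linarith) h1 (by linarith)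
  have hright : ∏ i ∈ Finset.Ico (p + 1) (2 * N + 1),
      |nodeSin N (p - i - δ i)| / |nodeSin N (i + δ i)| ≤ sinRatioProd N α (p + 1) := by
    have hsym : sinRatioProd N α (p + 1) = sinRatioProd N α (2 * N + 1 - p) := by
      have h := sinRatioProd_reflect hα0 hα (Nat.sub_le N p)
      have e1 : N + 1 + (N - p) = 2 * N + 1 - p := by omega
      have e2 : N + 1 - (N - p) = p + 1 := by omega
      rw [e1, e2] at h
      exact h.symm
    have hr : sinRatioProd N α (2 * N + 1 - p) = ∏ i ∈ Finset.Ico (p + 1) (2 * N + 1),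
        nodeSin N ((i : ℝ) - p + α) / nodeSin N (2 * N + 1 - i - α) := by
      unfold sinRatioProd
      rw [Finset.prod_div_distrib, Finset.prod_div_distrib]
      congr 1
      · have h := Finset.prod_Ico_add' (fun i : ℕ => nodeSin N ((i : ℝ) - p + α)) 1
          (2 * N + 1 - p) p
        have e1 : 1 + p = p + 1 := by omega
        have e2 : 2 * N + 1 - p + p = 2 * N + 1 := by omega
        rw [e1, e2] at h
        rw [← h]
        refine Finset.prod_congr rfl fun i _ => ?_
        push_cast
        congr 1
        ring
      · have h := Finset.prod_Ico_reflect (fun i : ℕ => nodeSin N (i - α)) (p + 1)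
          (show 2 * N + 1 ≤ 2 * N + 1 + 1 by omega)
        have e1 : 2 * N + 1 + 1 - (2 * N + 1) = 1 := by omega
        have e2 : 2 * N + 1 + 1 - (p + 1) = 2 * N + 1 - p := by omega
        rw [e1, e2] at h
        rw [← h]
        refine Finset.prod_congr rfl fun i hi => ?_
        rw [Finset.mem_Ico] at hi
        rw [Nat.cast_sub (by omega)]
        push_cast
        rfl
    rw [hsym, hr]
    refine Finset.prod_le_prod (fun i _ => by positivity) fun i hi => ?_
    rw [Finset.mem_Ico] at hi
    have h1 : (p : ℝ) + 1 ≤ i := by exact_mod_cast hi.1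
    have h2 : (i : ℝ) ≤ 2 * N := by exact_mod_cast (by omega : i ≤ 2 * N)
    have h := abs_nodeSin_div_le (N := N) (a := (i : ℝ) - p) (b := 2 * N + 1 - i) hα
      ((abs_neg (δ i)).trans_le (hδ i)) (by linarith) (by linarith) (by linarith)
    have c1 : |nodeSin N (p - i - δ i)| = |nodeSin N (i - p - -δ i)| := by
      rw [← abs_neg, ← nodeSin_neg]; congr 2; ring
    have c2 : nodeSin N (i + δ i) = nodeSin N (2 * N + 1 - i + -δ i) := by
      rw [← nodeSin_reflect]; congr 1; ring
    rw [c1, c2]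
    exact h
  have hpα : 0 < nodeSin N (p - α) := nodeSin_pos (by linarith) (by linarith)
  have hpα' : 0 < nodeSin N (p + α) := nodeSin_pos (by linarith) (by linarith)
  have hsα : 0 < nodeSin N α := nodeSin_pos hα0 (by linarith)
  obtain ⟨hd1, hd2⟩ := abs_le.1 (hδ p)
  have hmid : |nodeSin N (p - p - δ p)| / |nodeSin N (p + δ p)| ≤
      nodeSin N α / nodeSin N (p - α) := by
    have hnum : |nodeSin N (p - p - δ p)| ≤ nodeSin N α := by
      rw [sub_self, zero_sub, nodeSin_neg, abs_neg, abs_le, ← nodeSin_neg]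
      exact ⟨nodeSin_le_nodeSin (by linarith) hd1 (by linarith),
        nodeSin_le_nodeSin (by linarith) hd2 (by linarith)⟩
    have hden : nodeSin N (p - α) ≤ |nodeSin N (p + δ p)| :=
      (nodeSin_le_nodeSin (by linarith) (by linarith) (by linarith)).trans (le_abs_self _)
    gcongr
  have hR0 : 0 ≤ sinRatioProd N α p := sinRatioProd_nonneg hα0 hα (by omega)
  calc offDiagRatio N δ p ≤ sinRatioProd N α p * (nodeSin N α / nodeSin N (p - α)) *
        sinRatioProd N α (p + 1) := by
        rw [hsplit]
        refine mul_le_mul (mul_le_mul hleft hmid (by positivity) hR0) hright ?_ (by positivity)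
        exact Finset.prod_nonneg fun i _ => by positivity
    _ = nodeSin N α / nodeSin N (p + α) * sinRatioProd N α (p + 1) ^ 2 := by
        rw [sinRatioProd_succ N α hp1]
        generalize sinRatioProd N α p = R
        generalize nodeSin N α = A
        generalize nodeSin N (p - α) = B at hpα
        generalize nodeSin N (p + α) = D at hpα'
        field_simp

lemma nodeSin_div_le {N : ℕ} {α : ℝ} (hα0 : 0 < α) (hα : α < 1 / 2) {p : ℕ} (hpN : p ≤ N) :
    nodeSin N α / nodeSin N (p + α) ≤ π / 2 * (α / (p + α)) := by
  have hpN' : (p : ℝ) ≤ N := by exact_mod_cast hpN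
  have hp0 : (0 : ℝ) ≤ p := Nat.cast_nonneg p
  have hn : (0 : ℝ) < 2 * N + 1 := by positivity
  have hpi := Real.pi_pos
  have hnum : nodeSin N α ≤ π * α / (2 * N + 1) := Real.sin_le (by positivity)
  have hden : 2 / π * (π * (p + α) / (2 * N + 1)) ≤ nodeSin N (p + α) := by
    refine Real.mul_le_sin (by positivity) ?_
    rw [div_le_iff₀ hn]
    nlinarith
  calc nodeSin N α / nodeSin N (p + α)
      ≤ (π * α / (2 * N + 1)) / (2 / π * (π * (p + α) / (2 * N + 1))) := by gcongr
    _ = π / 2 * (α / (p + α)) := by field_simp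

lemma sum_offDiagRatio_le {N : ℕ} {α : ℝ} (hα0 : 0 < α) (hα : α < 1 / 2) {δ : ℕ → ℝ}
    (hδ : ∀ i, |δ i| ≤ α) :
    ∑ p ∈ Finset.Ico 1 (2 * N + 1), offDiagRatio N δ p ≤
      ∑ m ∈ Finset.Ico 1 (N + 1), π * (α / ((m : ℝ) + α)) *
        (∏ i ∈ Finset.Ico 1 (m + 1), ((i : ℝ) + α) / ((i : ℝ) - α)) ^ 2 := by
  have hle : ∀ ε : ℕ → ℝ, (∀ i, |ε i| ≤ α) → ∀ p ∈ Finset.Ico 1 (N + 1),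
      offDiagRatio N ε p ≤ π / 2 * (α / ((p : ℝ) + α)) *
        (∏ i ∈ Finset.Ico 1 (p + 1), ((i : ℝ) + α) / ((i : ℝ) - α)) ^ 2 := by
    intro ε hε p hp
    rw [Finset.mem_Ico] at hp
    refine (offDiagRatio_le hα0 hα hε hp.1 (by omega)).trans ?_
    have h1 := nodeSin_div_le hα0 hα (show p ≤ N by omega)
    have h2 := sinRatioProd_le hα0 hα (show p + 1 ≤ N + 1 by omega)
    have h3 : 0 ≤ sinRatioProd N α (p + 1) := sinRatioProd_nonneg hα0 hα (by omega)
    gcongr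
  have hreflect : ∑ p ∈ Finset.Ico (N + 1) (2 * N + 1), offDiagRatio N δ p =
      ∑ p ∈ Finset.Ico 1 (N + 1), offDiagRatio N (fun i => -δ (2 * N + 1 - i)) p := by
    have h := Finset.sum_Ico_reflect (offDiagRatio N (fun i => -δ (2 * N + 1 - i))) (N + 1)
      (show 2 * N + 1 ≤ 2 * N + 1 + 1 by omega)
    have e1 : 2 * N + 1 + 1 - (2 * N + 1) = 1 := by omega
    have e2 : 2 * N + 1 + 1 - (N + 1) = N + 1 := by omega
    rw [e1, e2] at h
    rw [← h]
    refine Finset.sum_congr rfl fun p hp => ?_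
    rw [Finset.mem_Ico] at hp
    exact offDiagRatio_reflect N δ (by omega)
  rw [← Finset.sum_Ico_consecutive _ (show 1 ≤ N + 1 by omega)
    (show N + 1 ≤ 2 * N + 1 by omega), hreflect]
  refine (add_le_add (Finset.sum_le_sum (hle δ hδ)) (Finset.sum_le_sum
    (hle _ fun i => (abs_neg _).trans_le (hδ _)))).trans_eq ?_
  rw [← Finset.sum_add_distrib]
  refine Finset.sum_congr rfl fun p _ => by ring

lemma sum_Icc_neg_eq_sum_range {M : Type*} [AddCommMonoid M] (N : ℕ) (f : ℤ → M) :
    ∑ k ∈ Finset.Icc (-(N : ℤ)) (N : ℤ), f k =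
      ∑ i ∈ Finset.range (2 * N + 1), f ((i : ℤ) - N) := by
  refine Finset.sum_bij' (fun k _ => (k + N).toNat) (fun i _ => (i : ℤ) - N) ?_ ?_ ?_ ?_ ?_
  · intro k hk
    rw [Finset.mem_Icc] at hk
    rw [Finset.mem_range]
    omega
  · intro i hi
    rw [Finset.mem_range] at hi
    rw [Finset.mem_Icc]
    omega
  · intro k hk
    rw [Finset.mem_Icc] at hk
    omega
  · intro i _
    omega
  · intro k hk
    rw [Finset.mem_Icc] at hk
    congr 1
    omega

/-- The representative of `k` modulo `2N+1` in `[-N, N]`. -/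
def wrap (N : ℕ) (k : ℤ) : ℤ := (k + N) % (2 * N + 1) - N

lemma wrap_mem (N : ℕ) (k : ℤ) : wrap N k ∈ Finset.Icc (-(N : ℤ)) (N : ℤ) := by
  have h1 := Int.emod_nonneg (k + N) (by omega : (2 * N + 1 : ℤ) ≠ 0)
  have h2 := Int.emod_lt_of_pos (k + N) (by omega : (0 : ℤ) < 2 * N + 1)
  rw [Finset.mem_Icc, wrap]
  omega

lemma exists_wrap_eq (N : ℕ) (k : ℤ) : ∃ z : ℤ, wrap N k = k - z * (2 * N + 1) := by
  refine ⟨(k + N) / (2 * N + 1), ?_⟩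
  have h := Int.emod_add_mul_ediv (k + N) (2 * N + 1)
  rw [wrap]
  linarith

lemma wrap_eq_of_mem {N : ℕ} {k m z : ℤ} (hm : m ∈ Finset.Icc (-(N : ℤ)) (N : ℤ))
    (h : k = m + z * (2 * N + 1)) : wrap N k = m := by
  rw [Finset.mem_Icc] at hm
  have e : k + N = m + N + z * (2 * N + 1) := by rw [h]; ring
  rw [wrap, e, Int.add_mul_emod_self_right, Int.emod_eq_of_lt (by omega) (by omega)]
  ring

/-- The indices other than `j` are the cyclic translates `j+1, …, j+2N`. -/
@[to_additive]
lemma prod_erase_eq_prod_wrap {M : Type*} [CommMonoid M] (N : ℕ) (f : ℤ → M) {j : ℤ}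
    (hj : j ∈ Finset.Icc (-(N : ℤ)) (N : ℤ)) :
    ∏ k ∈ (Finset.Icc (-(N : ℤ)) (N : ℤ)).erase j, f k =
      ∏ i ∈ Finset.Ico 1 (2 * N + 1), f (wrap N (j + (i : ℤ))) := by
  have hj' := Finset.mem_Icc.1 hj
  refine Finset.prod_bij'
    (fun k _ => if j < k then (k - j).toNat else (k - j + (2 * N + 1)).toNat)
    (fun i _ => wrap N (j + (i : ℤ))) ?_ ?_ ?_ ?_ ?_
  · intro k hk
    rw [Finset.mem_erase, Finset.mem_Icc] at hk
    rw [Finset.mem_Ico]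
    split_ifs <;> omega
  · intro i hi
    rw [Finset.mem_Ico] at hi
    refine Finset.mem_erase.2 ⟨fun h => ?_, wrap_mem N _⟩
    obtain ⟨z, hz⟩ := exists_wrap_eq N (j + i)
    rw [h] at hz
    have h1 : (i : ℤ) = z * (2 * N + 1) := by linarith
    have h2 : 0 < z := by
      by_contra hcon
      have : z * (2 * N + 1 : ℤ) ≤ 0 :=
        mul_nonpos_of_nonpos_of_nonneg (not_lt.1 hcon) (by positivity)
      omega
    have h3 : (2 * N + 1 : ℤ) ≤ z * (2 * N + 1) := le_mul_of_one_le_left (by positivity) h2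
    omega
  · intro k hk
    rw [Finset.mem_erase] at hk
    have hk' := Finset.mem_Icc.1 hk.2
    split_ifs with hlt
    · exact wrap_eq_of_mem (z := 0) hk.2 (by omega)
    · exact wrap_eq_of_mem (z := 1) hk.2 (by omega)
  · intro i hi
    rw [Finset.mem_Ico] at hi
    by_cases hle : j + (i : ℤ) ≤ N
    · have h := wrap_eq_of_mem (N := N) (k := j + i) (m := j + i) (z := 0)
        (Finset.mem_Icc.2 (by omega)) (by ring)
      simp only [h]
      rw [if_pos (by omega)]
      omega
    · have h := wrap_eq_of_mem (N := N) (k := j + i) (m := j + i - (2 * N + 1)) (z := 1)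
        (Finset.mem_Icc.2 (by omega)) (by ring)
      simp only [h]
      rw [if_neg (by omega)]
      omega
  · intro k hk
    rw [Finset.mem_erase] at hk
    have hk' := Finset.mem_Icc.1 hk.2
    congr 1
    symm
    split_ifs with hlt
    · exact wrap_eq_of_mem (z := 0) hk.2 (by omega)
    · exact wrap_eq_of_mem (z := 1) hk.2 (by omega)

lemma integral_exp_int (k : ℤ) :
    ∫ t in (-π)..π, Complex.exp (Complex.I * (k : ℂ) * (t : ℂ)) =
      if k = 0 then (2 * π : ℂ) else 0 := by
  split_ifs with hk
  · subst hk
    simp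
    ring
  · have hc : Complex.I * (k : ℂ) ≠ 0 :=
      mul_ne_zero Complex.I_ne_zero (by exact_mod_cast hk)
    rw [integral_exp_mul_complex hc]
    have : Complex.exp (Complex.I * k * (π : ℝ)) =
        Complex.exp (Complex.I * k * ((-π : ℝ) : ℂ)) := by
      rw [Complex.exp_eq_exp_iff_exists_int]
      exact ⟨k, by push_cast; ring⟩
    rw [this, sub_self, zero_div]

lemma sum_exp_int {N : ℕ} {k : ℤ} (hk : k ∈ Finset.Icc (-(N : ℤ)) (N : ℤ)) :
    ∑ m ∈ Finset.Icc (-(N : ℤ)) (N : ℤ),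
      Complex.exp (Complex.I * (k : ℂ) * (((m : ℝ) * (2 * π / (2 * N + 1)) : ℝ) : ℂ)) =
      if k = 0 then (2 * N + 1 : ℂ) else 0 := by
  rw [Finset.mem_Icc] at hk
  have hn : (2 * N + 1 : ℂ) ≠ 0 := by exact_mod_cast (by omega : 2 * N + 1 ≠ 0)
  split_ifs with hk0
  · subst hk0
    simp
    norm_cast
    omega
  · rw [sum_Icc_neg_eq_sum_range]
    set ζ := Complex.exp (Complex.I * k * (2 * π / (2 * N + 1))) with hζ
    have hterm : ∀ i ∈ Finset.range (2 * N + 1), Complex.exp (Complex.I * (k : ℂ) *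
        (((((i : ℤ) - N : ℤ) : ℝ) * (2 * π / (2 * N + 1)) : ℝ) : ℂ)) =
        Complex.exp (-(Complex.I * k * N * (2 * π / (2 * N + 1)))) * ζ ^ i := by
      intro i _
      rw [hζ, ← Complex.exp_nat_mul, ← Complex.exp_add]
      congr 1
      push_cast
      ring
    rw [Finset.sum_congr rfl hterm, ← Finset.mul_sum]
    have hpow : ζ ^ (2 * N + 1) = 1 := by
      rw [hζ, ← Complex.exp_nat_mul, Complex.exp_eq_one_iff]
      refine ⟨k, ?_⟩
      push_cast
      field_simp
    have hne : ζ ≠ 1 := by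
      intro h
      rw [hζ, Complex.exp_eq_one_iff] at h
      obtain ⟨z, hz⟩ := h
      have hpi : (π : ℂ) ≠ 0 := by exact_mod_cast Real.pi_ne_zero
      have hz' : (k : ℂ) = z * (2 * N + 1) := by
        have hI := Complex.I_ne_zero
        field_simp at hz
        linear_combination hz
      have hz'' : k = z * (2 * N + 1) := by exact_mod_cast hz'
      rcases lt_trichotomy z 0 with h | h | h
      · nlinarith
      · rw [h] at hz''; simp at hz''; exact hk0 hz''
      · nlinarith
    have hg := mul_geom_sum ζ (2 * N + 1)
    rw [hpow, sub_self] at hg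
    rw [(mul_eq_zero.1 hg).resolve_left (sub_ne_zero.2 hne), mul_zero]

/-- The equispaced trapezoidal rule is exact on `T_N`. -/
lemma IsTrigPoly.integral_eq {N : ℕ} {q : ℝ → ℂ} (hq : IsTrigPoly N q) :
    ∫ t in (-π)..π, q t = ((2 * π / (2 * N + 1) : ℝ) : ℂ) *
      ∑ m ∈ Finset.Icc (-(N : ℤ)) (N : ℤ), q ((m : ℝ) * (2 * π / (2 * N + 1))) := by
  obtain ⟨c, hc⟩ := hq
  have hn : (2 * N + 1 : ℂ) ≠ 0 := by exact_mod_cast (by omega : 2 * N + 1 ≠ 0)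
  simp only [hc]
  rw [Finset.sum_comm, intervalIntegral.integral_finsetSum, Finset.mul_sum]
  · refine Finset.sum_congr rfl fun k hk => ?_
    rw [intervalIntegral.integral_const_mul, integral_exp_int, ← Finset.mul_sum, sum_exp_int hk]
    split_ifs
    · push_cast
      field_simp
    · simp
  · intro k _
    exact Continuous.intervalIntegrable (by fun_prop) _ _

lemma isTrigPoly_prod_sin {N : ℕ} (s : Finset ℤ) (hs : s.card = 2 * N) (x : ℤ → ℝ) :
    IsTrigPoly N (fun t => ((∏ k ∈ s, Real.sin ((t - x k) / 2) : ℝ) : ℂ)) := by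
  let P : Polynomial ℂ := ∏ k ∈ s,
    (Polynomial.C (Complex.exp (-(x k / 2) * Complex.I) / (2 * Complex.I)) * Polynomial.X +
      Polynomial.C (-Complex.exp ((x k / 2) * Complex.I) / (2 * Complex.I)))
  have hdeg : P.natDegree < 2 * N + 1 := by
    refine Nat.lt_succ_of_le ((Polynomial.natDegree_prod_le _ _).trans ?_)
    refine (Finset.sum_le_card_nsmul _ _ 1 fun k _ => Polynomial.natDegree_linear_le).trans ?_
    simp [hs]
  refine ⟨fun k => P.coeff (k + N).toNat, fun t => ?_⟩
  have hfac : ∀ k ∈ s, ((Real.sin ((t - x k) / 2) : ℝ) : ℂ) =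
      Complex.exp (-(t / 2) * Complex.I) *
      (Complex.exp (-(x k / 2) * Complex.I) / (2 * Complex.I) * Complex.exp (t * Complex.I) +
        -Complex.exp ((x k / 2) * Complex.I) / (2 * Complex.I)) := by
    intro k _
    have e1 : Complex.exp (-(t / 2) * Complex.I) * Complex.exp (-(x k / 2) * Complex.I) *
        Complex.exp (t * Complex.I) = Complex.exp (((t - x k) / 2) * Complex.I) := by
      rw [← Complex.exp_add, ← Complex.exp_add]; congr 1; ring
    have e2 : Complex.exp (-(t / 2) * Complex.I) * Complex.exp ((x k / 2) * Complex.I) =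
        Complex.exp (-((t - x k) / 2) * Complex.I) := by
      rw [← Complex.exp_add]; congr 1; ring
    rw [Complex.ofReal_sin, Complex.sin]
    push_cast
    rw [← e1, ← e2]
    have hI := Complex.I_ne_zero
    field_simp
    rw [Complex.I_sq]
    ring
  beta_reduce
  rw [Complex.ofReal_prod, Finset.prod_congr rfl hfac, Finset.prod_mul_distrib,
    Finset.prod_const, hs]
  have hP : ∏ k ∈ s,
      (Complex.exp (-(x k / 2) * Complex.I) / (2 * Complex.I) * Complex.exp (t * Complex.I) +
        -Complex.exp ((x k / 2) * Complex.I) / (2 * Complex.I)) =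
      P.eval (Complex.exp (t * Complex.I)) := by
    simp [P, Polynomial.eval_prod]
  rw [hP, Polynomial.eval_eq_sum_range' hdeg, sum_Icc_neg_eq_sum_range, Finset.mul_sum]
  refine Finset.sum_congr rfl fun i _ => ?_
  rw [sub_add_cancel, Int.toNat_natCast, ← Complex.exp_nat_mul, ← Complex.exp_nat_mul,
    mul_left_comm, ← Complex.exp_add]
  congr 2
  push_cast
  ring

/-- an explicit size condition, involving the gamma function and the
Euler–Mascheroni constant, under which all quadrature weights at α-perturbed nodes are
nonnegative. -/
theorem weights_nonneg_explicit (α L : ℝ) (hα0 : 0 < α) (hα : α < 0.15) (hL : 0 < L)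
    (hLcond : (α + L) * Real.exp (4*L) ≤
      (Real.Gamma (1 + α))^2 / (π * Real.Gamma (1 - 2*α)))
    (N : ℕ) (hN : 2 ≤ N)
    (hNcond : Real.log ((N : ℝ) + 1 + α) + 1 / (2*(N : ℝ) - 1) ≤
      (1 - Real.eulerMascheroniConstant) + L / α)
    (x : ℤ → ℝ) (hx : PerturbedNodes N α x)
    (w : ℤ → ℝ) (hw : ExactQuad N x w) :
    ∀ j ∈ Finset.Icc (-(N:ℤ)) (N:ℤ), 0 ≤ w j := by
  intro j hj
  have hα2 : α < 1 / 2 := by linarith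
  have hn : (0 : ℝ) < 2 * N + 1 := by positivity
  have hpi := Real.pi_pos
  set h : ℝ := 2 * π / (2 * N + 1) with hh
  have hh0 : 0 < h := by positivity
  have hδ : ∀ k ∈ Finset.Icc (-(N : ℤ)) (N : ℤ), |x k / h - k| ≤ α := by
    intro k hk
    have e : x k / h - k = (x k - k * h) / h := by field_simp
    rw [e, abs_div, abs_of_pos hh0, div_le_iff₀ hh0]
    exact hx k hk
  have hsin : ∀ (t : ℝ) (k : ℤ), Real.sin ((t * h - x k) / 2) = nodeSin N (t - x k / h) := by
    intro t k
    unfold nodeSin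
    congr 1
    rw [hh]
    field_simp
  set s := (Finset.Icc (-(N : ℤ)) (N : ℤ)).erase j with hs
  set r : ℝ → ℝ := fun t => ∏ k ∈ s, Real.sin ((t - x k) / 2) with hr
  have hcard : s.card = 2 * N := by
    rw [hs, Finset.card_erase_of_mem hj, Int.card_Icc]
    omega
  have hpoly := isTrigPoly_prod_sin s hcard x
  -- The quadrature identity for `r`, which vanishes at every node but the one of index `j`.
  have hquad : w j * r (x j) = h * ∑ m ∈ Finset.Icc (-(N : ℤ)) (N : ℤ), r (m * h) := by
    have h1 := hw _ hpoly
    rw [hpoly.integral_eq, Finset.sum_eq_single_of_mem j hj] at h1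
    · simp only [← Complex.ofReal_sum, ← Complex.ofReal_mul] at h1
      exact Complex.ofReal_injective h1
    · intro i hi hij
      have hz : ∏ k ∈ s, Real.sin ((x i - x k) / 2) = 0 :=
        Finset.prod_eq_zero (Finset.mem_erase.2 ⟨hij, hi⟩) (by simp)
      rw [hz]
      simp
  have hsign : 0 < r (x j) * r (j * h) := by
    rw [hr, ← Finset.prod_mul_distrib]
    refine Finset.prod_pos fun k hk => ?_
    obtain ⟨hkj, hk⟩ := Finset.mem_erase.1 hk
    have e : x j = x j / h * h := by field_simp
    rw [e, hsin, hsin]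
    obtain ⟨a1, a2⟩ := abs_le.1 (hδ j hj)
    obtain ⟨b1, b2⟩ := abs_le.1 (hδ k hk)
    rw [Finset.mem_Icc] at hj hk
    rcases lt_or_gt_of_ne hkj with hlt | hlt
    · have c1 : (k : ℝ) + 1 ≤ j := by exact_mod_cast hlt
      have c2 : (j : ℝ) - k ≤ 2 * N := by exact_mod_cast (by omega : j - k ≤ 2 * N)
      exact mul_pos (nodeSin_pos (by linarith) (by linarith))
        (nodeSin_pos (by linarith) (by linarith))
    · have c1 : (j : ℝ) + 1 ≤ k := by exact_mod_cast hlt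
      have c2 : (k : ℝ) - j ≤ 2 * N := by exact_mod_cast (by omega : k - j ≤ 2 * N)
      rw [← neg_mul_neg, ← nodeSin_neg, ← nodeSin_neg]
      exact mul_pos (nodeSin_pos (by linarith) (by linarith))
        (nodeSin_pos (by linarith) (by linarith))
  set d : ℕ → ℝ := fun i => x (wrap N (j + i)) / h - wrap N (j + i) with hd
  have hdα : ∀ i, |d i| ≤ α := fun i => hδ _ (wrap_mem N _)
  have habs : ∀ p : ℕ, |r (wrap N (j + p) * h)| =
      ∏ i ∈ Finset.Ico 1 (2 * N + 1), |nodeSin N (p - i - d i)| := by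
    intro p
    rw [hr]
    beta_reduce
    rw [Finset.abs_prod, hs, prod_erase_eq_prod_wrap N _ hj]
    refine Finset.prod_congr rfl fun i _ => ?_
    rw [hsin]
    obtain ⟨z, hz⟩ := exists_wrap_eq N (j + p)
    obtain ⟨y, hy⟩ := exists_wrap_eq N (j + i)
    have hz' : (wrap N (j + p) : ℝ) = j + p - z * (2 * N + 1) := by rw [hz]; push_cast; ring
    have hy' : (wrap N (j + i) : ℝ) = j + i - y * (2 * N + 1) := by rw [hy]; push_cast; ring
    rw [← abs_nodeSin_sub_int_mul N (p - i - d i) (z - y)]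
    congr 2
    simp only [hd]
    rw [hz', hy']
    push_cast
    ring
  have hj0 : wrap N (j + (0 : ℕ)) = j := wrap_eq_of_mem (z := 0) hj (by simp)
  have hdiag : |r (j * h)| = ∏ i ∈ Finset.Ico 1 (2 * N + 1), |nodeSin N (i + d i)| := by
    have h0 := habs 0
    rw [hj0] at h0
    rw [h0]
    refine Finset.prod_congr rfl fun i _ => ?_
    rw [← abs_neg, ← nodeSin_neg]
    congr 2
    push_cast
    ring
  have hr0 : 0 < |r (j * h)| := abs_pos.2 (right_ne_zero_of_mul hsign.ne')
  have hoff : ∑ m ∈ s, |r (m * h)| ≤ |r (j * h)| := by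
    have hratio : ∀ p : ℕ, |r (wrap N (j + p) * h)| = offDiagRatio N d p * |r (j * h)| := by
      intro p
      rw [habs, offDiagRatio, Finset.prod_div_distrib, ← hdiag, div_mul_cancel₀ _ hr0.ne']
    rw [hs, sum_erase_eq_sum_wrap N _ hj, Finset.sum_congr rfl fun p _ => hratio p,
      ← Finset.sum_mul]
    refine mul_le_of_le_one_left hr0.le ?_
    exact (sum_offDiagRatio_le hα0 hα2 hdα).trans
      (pi_mul_sum_prod_ratio_sq_le_one α L hα0 hα hLcond N hN hNcond)
  have htotal : 0 ≤ r (j * h) * ∑ m ∈ Finset.Icc (-(N : ℤ)) (N : ℤ), r (m * h) := by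
    rw [← Finset.add_sum_erase _ _ hj, ← hs, mul_add]
    have h1 : |r (j * h) * ∑ m ∈ s, r (m * h)| ≤ |r (j * h)| * |r (j * h)| := by
      rw [abs_mul]
      exact mul_le_mul_of_nonneg_left ((Finset.abs_sum_le_sum_abs _ _).trans hoff) hr0.le
    rw [abs_mul_abs_self] at h1
    linarith [(abs_le.1 h1).1]
  have hprod : 0 ≤ w j * (r (x j) * r (j * h)) := by
    have e : w j * (r (x j) * r (j * h)) =
        h * (r (j * h) * ∑ m ∈ Finset.Icc (-(N : ℤ)) (N : ℤ), r (m * h)) := by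
      linear_combination r (j * h) * hquad
    rw [e]
    positivity
  exact nonneg_of_mul_nonneg_left hprod hsign
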